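/- Let q > 2 and let u : ℝ/ℤ → ℝⁿ be an embedded, regular C¹ curve. Then TP(u) < ∞ if and only if the unit tangent field u'/|u'| belongs to W^{1-1/q,q}(ℝ/ℤ, ℝⁿ), i.e. if and only if [u'/|u'|]_{W^{1-1/q,q}} < ∞. -/

import Mathlib

open MeasureTheory Set Filter
open scoped RealInnerProductSpace ENNReal Topology

noncomputable section

/-- The distance on the circle `ℝ/ℤ` between the points represented by `x` and `y`. -/
def circDist (x y : ℝ) : ℝ := ‖((x - y : ℝ) : AddCircle (1 : ℝ))‖

/-- The representative of `z` modulo `1` lying in `(-1/2, 1/2]`. -/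
def wrap (z : ℝ) : ℝ := 1 / 2 - Int.fract (1 / 2 - z)

/-- Squared wedge norm `|a ∧ b|² = |a|²|b|² - ⟨a,b⟩²`. -/
def wedgeSq {n : ℕ} (a b : EuclideanSpace ℝ (Fin n)) : ℝ :=
  ‖a‖ ^ 2 * ‖b‖ ^ 2 - ⟪a, b⟫ ^ 2

/-- Wedge inner product `⟨a∧b, c∧d⟩ = ⟨a,c⟩⟨b,d⟩ - ⟨a,d⟩⟨b,c⟩`. -/
def wedgeInner {n : ℕ} (a b c d : EuclideanSpace ℝ (Fin n)) : ℝ :=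
  ⟪a, c⟫ * ⟪b, d⟫ - ⟪a, d⟫ * ⟪b, c⟫

/-- Fundamental domain for double integrals over `(ℝ/ℤ)²`. -/
def unitSq : Set (ℝ × ℝ) := Ioc (0 : ℝ) 1 ×ˢ Ioc (0 : ℝ) 1

/-- The tangent-point functional `TP` (extended-real-valued). -/
def TPe {n : ℕ} (q : ℝ) (u : ℝ → EuclideanSpace ℝ (Fin n)) : ℝ≥0∞ :=
  ENNReal.ofReal (1 / q) *
    ∫⁻ p in unitSq, ENNReal.ofReal
      (wedgeSq (deriv u p.2) (u p.1 - u p.2) ^ (q / 2) / ‖u p.1 - u p.2‖ ^ (2 * q))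

/-- The tangent-point functional `TP` (real-valued). -/
def TPr {n : ℕ} (q : ℝ) (u : ℝ → EuclideanSpace ℝ (Fin n)) : ℝ := (TPe q u).toReal

/-- The `q`-th power of the Sobolev–Slobodeckii seminorm `[f]_{W^{s,q}}` on `ℝ/ℤ`. -/
def sobSemPow {n : ℕ} (s q : ℝ) (f : ℝ → EuclideanSpace ℝ (Fin n)) : ℝ≥0∞ :=
  ∫⁻ p in unitSq, ENNReal.ofReal (‖f p.1 - f p.2‖ ^ q / circDist p.1 p.2 ^ (1 + s * q))

/-- The `W^{s,q}`-norm `‖f‖_{L^q} + [f]_{W^{s,q}}`. -/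
def Wnorm {n : ℕ} (s q : ℝ) (f : ℝ → EuclideanSpace ℝ (Fin n)) : ℝ :=
  (∫ x in Ioc (0 : ℝ) 1, ‖f x‖ ^ q) ^ (1 / q) + (sobSemPow s q f).toReal ^ (1 / q)

/-- The bi-Lipschitz constant `bil(u) = sup_{x ≢ y} |x-y|_{ℝ/ℤ}/|u(x)-u(y)|`. -/
def bil {n : ℕ} (u : ℝ → EuclideanSpace ℝ (Fin n)) : ℝ≥0∞ :=
  ⨆ (x : ℝ) (y : ℝ) (_ : circDist x y ≠ 0),
    ENNReal.ofReal (circDist x y) / ENNReal.ofReal ‖u x - u y‖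

/-- The `L^∞`-norm of the derivative of `u`. -/
def linfD {n : ℕ} (u : ℝ → EuclideanSpace ℝ (Fin n)) : ℝ≥0∞ :=
  ⨆ x : ℝ, (‖deriv u x‖₊ : ℝ≥0∞)

/-- A periodic curve is embedded if it is injective on the circle `ℝ/ℤ`. -/
def Embedded {n : ℕ} (u : ℝ → EuclideanSpace ℝ (Fin n)) : Prop :=
  ∀ x y : ℝ, u x = u y → ((x : AddCircle (1 : ℝ)) = (y : AddCircle (1 : ℝ)))

/-- A curve is regular if `min_{ℝ/ℤ} |u'| > 0`. -/
def Regular {n : ℕ} (u : ℝ → EuclideanSpace ℝ (Fin n)) : Prop :=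
  0 < ⨅ x : ℝ, ‖deriv u x‖

/-- Orthogonal projection of `b` onto the orthogonal complement of `ℝ a`. -/
def projPerp {n : ℕ} (a b : EuclideanSpace ℝ (Fin n)) : EuclideanSpace ℝ (Fin n) :=
  b - (⟪b, a⟫ / ‖a‖ ^ 2) • a

/-- The classical tangent-point functional (extended-real-valued). -/
def TPcle {n : ℕ} (q : ℝ) (u : ℝ → EuclideanSpace ℝ (Fin n)) : ℝ≥0∞ :=
  ENNReal.ofReal (1 / q) *
    ∫⁻ p in unitSq, ENNReal.ofReal
      (‖projPerp (deriv u p.2) (u p.1 - u p.2)‖ ^ q / ‖u p.1 - u p.2‖ ^ (2 * q) *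
        (‖deriv u p.1‖ * ‖deriv u p.2‖))

/-- The integrand of the functional `M(u; v, w)`. -/
def Mintegrand {n : ℕ} (q : ℝ) (u v w : ℝ → EuclideanSpace ℝ (Fin n)) (p : ℝ × ℝ) : ℝ :=
  wedgeSq (deriv u p.2) (u p.1 - u p.2) ^ ((q - 2) / 2) / ‖u p.1 - u p.2‖ ^ (2 * q) *
    wedgeInner (deriv u p.2) (u p.1 - u p.2) (deriv v p.2)
      (w p.1 - w p.2 - wrap (p.1 - p.2) • deriv w p.2)

/-- The functional `M(u; v, w)` appearing in the first variation of `TP`. -/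
def Mfun {n : ℕ} (q : ℝ) (u v w : ℝ → EuclideanSpace ℝ (Fin n)) : ℝ :=
  ∫ p in unitSq, Mintegrand q u v w p

/-- The integrand of the functional `A(u; v, w)`. -/
def Aintegrand {n : ℕ} (q : ℝ) (u v w : ℝ → EuclideanSpace ℝ (Fin n)) (p : ℝ × ℝ) : ℝ :=
  wedgeSq (deriv u p.2) (u p.1 - u p.2) ^ (q / 2) / ‖u p.1 - u p.2‖ ^ (2 * q + 2) *
    ⟪v p.1 - v p.2, w p.1 - w p.2⟫

/-- The functional `A(u; v, w)` appearing in the first variation of `TP`. -/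
def Afun {n : ℕ} (q : ℝ) (u v w : ℝ → EuclideanSpace ℝ (Fin n)) : ℝ :=
  ∫ p in unitSq, Aintegrand q u v w p

/-- The first variation `δTP(u)[w] = M(u;u,w) + M(u;w,u) - 2A(u;u,w)`. -/
def deltaTP {n : ℕ} (q : ℝ) (u w : ℝ → EuclideanSpace ℝ (Fin n)) : ℝ :=
  Mfun q u u w + Mfun q u w u - 2 * Afun q u u w

/-- The `H²` inner product on periodic curves. -/
def H2inner (v w : ℝ → EuclideanSpace ℝ (Fin 3)) : ℝ :=
  ∫ x in Ioc (0 : ℝ) 1,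
    (⟪v x, w x⟫ + ⟪deriv v x, deriv w x⟫ + ⟪deriv (deriv v) x, deriv (deriv w) x⟫)

/-- The total energy `E(u) = (κ/2)∫|u''|² + ρ TP(u)`. -/
def energyE (κ ρ q : ℝ) (u : ℝ → EuclideanSpace ℝ (Fin 3)) : ℝ :=
  κ / 2 * (∫ x in Ioc (0 : ℝ) 1, ‖deriv (deriv u) x‖ ^ 2) + ρ * TPr q u

/-- The unit tangent field `u'/|u'|` of a curve. -/
def unitTangent {n : ℕ} (u : ℝ → EuclideanSpace ℝ (Fin n)) (x : ℝ) : EuclideanSpace ℝ (Fin n) :=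
  ‖deriv u x‖⁻¹ • deriv u x

lemma circDist_nonneg (x y : ℝ) : 0 ≤ circDist x y := norm_nonneg _

lemma circDist_comm (x y : ℝ) : circDist x y = circDist y x := by
  unfold circDist
  rw [← norm_neg, ← AddCircle.coe_neg, neg_sub]

lemma circDist_eq_abs {x y : ℝ} (h : |x - y| ≤ 1 / 2) : circDist x y = |x - y| := by
  unfold circDist
  rw [AddCircle.norm_coe_eq_abs_iff _ one_ne_zero]
  simpa using h

lemma circDist_add_int (x y : ℝ) (k : ℤ) : circDist (x + k) y = circDist x y := by
  unfold circDist
  rw [UnitAddCircle.norm_eq, UnitAddCircle.norm_eq, add_sub_right_comm, round_add_intCast]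
  push_cast
  congr 1
  ring

lemma exists_int_abs_add_sub_le_half (x y : ℝ) : ∃ k : ℤ, |x + k - y| ≤ 1 / 2 := by
  refine ⟨-round (x - y), ?_⟩
  have h := abs_sub_round (x - y)
  push_cast
  rwa [show x + -(round (x - y) : ℝ) - y = x - y - round (x - y) by ring]

lemma measurable_circDist : Measurable fun p : ℝ × ℝ => circDist p.1 p.2 := by
  unfold circDist
  exact (continuous_norm.comp
    ((AddCircle.continuous_mk' 1).comp (continuous_fst.sub continuous_snd))).measurable

lemma Function.Periodic.apply_add_int {α : Type*} {f : ℝ → α} (hf : Function.Periodic f 1)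
    (x : ℝ) (k : ℤ) : f (x + k) = f x := by
  simpa using hf.int_mul k x

lemma Function.Periodic.deriv_periodic {E : Type*} [NormedAddCommGroup E] [NormedSpace ℝ E]
    {f : ℝ → E} {c : ℝ} (hf : Function.Periodic f c) : Function.Periodic (deriv f) c := by
  intro x
  rw [← deriv_comp_add_const, funext hf]

lemma Function.Periodic.uniform_continuity {E : Type*} [NormedAddCommGroup E]
    {f : ℝ → E} (hf : Function.Periodic f 1) (hc : Continuous f) {ε : ℝ} (hε : 0 < ε) :
    ∃ δ > 0, ∀ x y, |x - y| < δ → ‖f x - f y‖ < ε := by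
  have h := (isCompact_Icc (a := (-1 : ℝ)) (b := 2)).uniformContinuousOn_of_continuous
    hc.continuousOn
  obtain ⟨δ, hδ, h⟩ := Metric.uniformContinuousOn_iff.1 h ε hε
  refine ⟨min δ 1, by positivity, fun x y hxy => ?_⟩
  have h1 := Int.floor_le y
  have h2 := Int.lt_floor_add_one y
  have h3 := abs_lt.1 (hxy.trans_le (min_le_right _ _))
  have := h (x + (-⌊y⌋ : ℤ)) (by push_cast; constructor <;> linarith)
    (y + (-⌊y⌋ : ℤ)) (by push_cast; constructor <;> linarith)
    (by rw [Real.dist_eq, add_sub_add_right_eq_sub]; exact hxy.trans_le (min_le_left _ _))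
  rwa [hf.apply_add_int, hf.apply_add_int, dist_eq_norm] at this

lemma setLIntegral_periodic {f : ℝ → ℝ≥0∞} (hf : Function.Periodic f 1) (a b : ℝ) :
    ∫⁻ x in Ioc a (a + 1), f x = ∫⁻ x in Ioc b (b + 1), f x :=
  (isAddFundamentalDomain_Ioc one_pos a).setLIntegral_eq (isAddFundamentalDomain_Ioc one_pos b) f
    hf.map_vadd_zmultiples

section wedge

variable {n : ℕ}

lemma wedgeSq_nonneg (a b : EuclideanSpace ℝ (Fin n)) : 0 ≤ wedgeSq a b := by
  have h := abs_real_inner_le_norm a b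
  unfold wedgeSq
  have := pow_le_pow_left₀ (abs_nonneg _) h 2
  rw [sq_abs, mul_pow] at this
  linarith

lemma wedgeSq_neg_right (a b : EuclideanSpace ℝ (Fin n)) : wedgeSq a (-b) = wedgeSq a b := by
  simp [wedgeSq]

lemma wedgeSq_smul_left (r : ℝ) (a b : EuclideanSpace ℝ (Fin n)) :
    wedgeSq (r • a) b = r ^ 2 * wedgeSq a b := by
  simp only [wedgeSq, norm_smul, real_inner_smul_left, mul_pow, Real.norm_eq_abs, sq_abs]
  ring

lemma wedgeSq_smul_right (r : ℝ) (a b : EuclideanSpace ℝ (Fin n)) :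
    wedgeSq a (r • b) = r ^ 2 * wedgeSq a b := by
  simp only [wedgeSq, norm_smul, real_inner_smul_right, mul_pow, Real.norm_eq_abs, sq_abs]
  ring

/-- A vector is at least as far from any point of a line as from the line itself. -/
lemma wedgeSq_le_norm_sub_smul_sq {a : EuclideanSpace ℝ (Fin n)} (ha : ‖a‖ = 1)
    (w : EuclideanSpace ℝ (Fin n)) (l : ℝ) : wedgeSq a w ≤ ‖w - l • a‖ ^ 2 := by
  rw [norm_sub_sq_real, norm_smul, real_inner_smul_right, real_inner_comm, mul_pow,
    Real.norm_eq_abs, sq_abs]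
  simp only [wedgeSq, ha]
  nlinarith [sq_nonneg (l - ⟪a, w⟫)]

lemma norm_sub_sq_le_two_mul_wedgeSq {a b : EuclideanSpace ℝ (Fin n)} (ha : ‖a‖ = 1)
    (hb : ‖b‖ = 1) (hab : 0 ≤ ⟪a, b⟫) : ‖a - b‖ ^ 2 ≤ 2 * wedgeSq a b := by
  have h1 : ⟪a, b⟫ ≤ 1 := by simpa [ha, hb] using real_inner_le_norm a b
  rw [norm_sub_sq_real]
  simp only [wedgeSq, ha, hb]
  nlinarith

/-- Unit vectors which both make an acute angle with `w` are close if both are nearly parallel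
to `w`. -/
lemma norm_mul_norm_sub_le_wedge {a b w : EuclideanSpace ℝ (Fin n)} (ha : ‖a‖ = 1)
    (hb : ‖b‖ = 1) (haw : 0 ≤ ⟪a, w⟫) (hbw : 0 ≤ ⟪b, w⟫) :
    ‖w‖ * ‖a - b‖ ≤ 2 * (√(wedgeSq a w) + √(wedgeSq b w)) := by
  rcases eq_or_ne w 0 with rfl | hw
  · simp only [norm_zero, zero_mul]; positivity
  have hw' : 0 < ‖w‖ := norm_pos_iff.2 hw
  set e := ‖w‖⁻¹ • w with he
  have hwe : w = ‖w‖ • e := by rw [he, smul_inv_smul₀ hw'.ne']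
  have hen : ‖e‖ = 1 := by rw [he, norm_smul, norm_inv, norm_norm, inv_mul_cancel₀ hw'.ne']
  have key : ∀ c : EuclideanSpace ℝ (Fin n), ‖c‖ = 1 → 0 ≤ ⟪c, w⟫ →
      ‖w‖ * ‖c - e‖ ≤ 2 * √(wedgeSq c w) := by
    intro c hc hcw
    have hce : 0 ≤ ⟪c, e⟫ := by rw [he, real_inner_smul_right]; positivity
    have h := norm_sub_sq_le_two_mul_wedgeSq hc hen hce
    have h0 := wedgeSq_nonneg c e
    have h2 : wedgeSq c w = ‖w‖ ^ 2 * wedgeSq c e := by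
      conv_lhs => rw [hwe]
      rw [wedgeSq_smul_right]
    rw [h2, Real.sqrt_mul (by positivity), Real.sqrt_sq hw'.le, mul_left_comm]
    refine mul_le_mul_of_nonneg_left ?_ hw'.le
    refine (sq_le_sq₀ (norm_nonneg _) (by positivity)).1 ?_
    rw [mul_pow, Real.sq_sqrt h0]
    linarith
  have htri : ‖a - b‖ ≤ ‖a - e‖ + ‖b - e‖ := by
    rw [norm_sub_rev b e]; exact norm_sub_le_norm_sub_add_norm_sub a e b
  nlinarith [key a ha haw, key b hb hbw]

end wedge

section curve

variable {n : ℕ} {u : ℝ → EuclideanSpace ℝ (Fin n)}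

lemma Regular.exists_lower_bound (hreg : Regular u) : ∃ c > 0, ∀ x, c ≤ ‖deriv u x‖ :=
  ⟨_, hreg, fun x => ciInf_le ⟨0, by rintro _ ⟨y, rfl⟩; exact norm_nonneg _⟩ x⟩

lemma Regular.deriv_ne_zero (hreg : Regular u) (x : ℝ) : deriv u x ≠ 0 := by
  obtain ⟨c, hc, h⟩ := hreg.exists_lower_bound
  exact norm_pos_iff.1 (hc.trans_le (h x))

lemma exists_norm_deriv_le (hC1 : ContDiff ℝ 1 u) (hper : Function.Periodic u 1) :
    ∃ C > 0, ∀ x, ‖deriv u x‖ ≤ C := by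
  have hb := hper.deriv_periodic.isBounded_of_continuous one_ne_zero (hC1.continuous_deriv le_rfl)
  obtain ⟨C, hC, h⟩ := hb.exists_pos_norm_le
  exact ⟨C, hC, fun x => h _ ⟨x, rfl⟩⟩

lemma periodic_unitTangent (hper : Function.Periodic u 1) :
    Function.Periodic (unitTangent u) 1 := by
  intro x
  simp only [unitTangent, hper.deriv_periodic x]

lemma continuous_unitTangent (hC1 : ContDiff ℝ 1 u) (hreg : Regular u) :
    Continuous (unitTangent u) :=
  ((hC1.continuous_deriv le_rfl).norm.inv₀ fun x => norm_ne_zero_iff.2 (hreg.deriv_ne_zero x)).smul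
    (hC1.continuous_deriv le_rfl)

lemma norm_unitTangent (hreg : Regular u) (x : ℝ) : ‖unitTangent u x‖ = 1 := by
  rw [unitTangent, norm_smul, norm_inv, norm_norm,
    inv_mul_cancel₀ (norm_ne_zero_iff.2 (hreg.deriv_ne_zero x))]

lemma norm_smul_unitTangent (hreg : Regular u) (x : ℝ) :
    ‖deriv u x‖ • unitTangent u x = deriv u x :=
  smul_inv_smul₀ (norm_ne_zero_iff.2 (hreg.deriv_ne_zero x)) _

lemma wedgeSq_deriv_eq (hreg : Regular u) (x : ℝ) (w : EuclideanSpace ℝ (Fin n)) :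
    wedgeSq (deriv u x) w = ‖deriv u x‖ ^ 2 * wedgeSq (unitTangent u x) w := by
  conv_lhs => rw [← norm_smul_unitTangent hreg x]
  rw [wedgeSq_smul_left]

lemma norm_sub_le_mul_circDist (hC1 : ContDiff ℝ 1 u) (hper : Function.Periodic u 1) {C : ℝ}
    (hC : ∀ x, ‖deriv u x‖ ≤ C) (x y : ℝ) : ‖u x - u y‖ ≤ C * circDist x y := by
  obtain ⟨k, hk⟩ := exists_int_abs_add_sub_le_half x y
  rw [← circDist_add_int x y k, circDist_eq_abs hk, ← hper.apply_add_int x k]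
  exact convex_univ.norm_image_sub_le_of_norm_deriv_le
    (fun z _ => (hC1.differentiable one_ne_zero) z) (fun z _ => hC z) (mem_univ _) (mem_univ _)

/-- On short arcs the chord makes an acute angle with the tangents at both ends. -/
lemma exists_inner_unitTangent_lower_bound (hC1 : ContDiff ℝ 1 u) (hper : Function.Periodic u 1)
    (hreg : Regular u) :
    ∃ c > 0, ∃ δ > 0, δ ≤ 1 / 2 ∧ ∀ x y, y ≤ x → x - y ≤ δ →
      c * (x - y) ≤ ⟪unitTangent u x, u x - u y⟫ ∧ c * (x - y) ≤ ⟪unitTangent u y, u x - u y⟫ := by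
  obtain ⟨c, hc, hcu⟩ := hreg.exists_lower_bound
  obtain ⟨δ, hδ, hunif⟩ := (periodic_unitTangent hper).uniform_continuity
    (continuous_unitTangent hC1 hreg) one_pos
  refine ⟨c / 2, by positivity, min (δ / 2) (1 / 2), by positivity, min_le_right _ _, ?_⟩
  intro x y hyx hxy
  have hxy' : x - y < δ := by linarith [min_le_left (δ / 2) (1 / 2 : ℝ)]
  have key : ∀ z ∈ Icc y x, c / 2 * (x - y) ≤ ⟪unitTangent u z, u x - u y⟫ := by
    intro z hz
    have hd : ∀ t, HasDerivAt (fun t => ⟪unitTangent u z, u t⟫)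
        ⟪unitTangent u z, deriv u t⟫ t := fun t => by
      simpa using (hasDerivAt_const t (unitTangent u z)).inner ℝ
        ((hC1.differentiable one_ne_zero) t).hasDerivAt
    have := (convex_Icc y x).mul_sub_le_image_sub_of_le_deriv
      (f := fun t => ⟪unitTangent u z, u t⟫) (C := c / 2)
      (fun t _ => (hd t).continuousAt.continuousWithinAt)
      (fun t _ => (hd t).differentiableAt.differentiableWithinAt)
      (fun t ht => by
        rw [(hd t).deriv, ← norm_smul_unitTangent hreg t, real_inner_smul_right]
        have ht' := interior_subset ht
        have h1 := (hunif z t (by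
          rw [abs_lt]; constructor <;> linarith [hz.1, hz.2, ht'.1, ht'.2])).le
        have h2 := norm_sub_sq_real (unitTangent u z) (unitTangent u t)
        rw [norm_unitTangent hreg, norm_unitTangent hreg] at h2
        have h3 : ‖unitTangent u z - unitTangent u t‖ ^ 2 ≤ 1 := by
          nlinarith [norm_nonneg (unitTangent u z - unitTangent u t)]
        nlinarith [hcu t])
      y (left_mem_Icc.2 hyx) x (right_mem_Icc.2 hyx) hyx
    rwa [inner_sub_right]
  exact ⟨key x (right_mem_Icc.2 hyx), key y (left_mem_Icc.2 hyx)⟩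

/-- An embedded regular `C¹` closed curve is bi-Lipschitz. -/
lemma exists_mul_circDist_le_norm_sub (hC1 : ContDiff ℝ 1 u) (hper : Function.Periodic u 1)
    (hemb : Embedded u) (hreg : Regular u) :
    ∃ m > 0, ∀ x y, m * circDist x y ≤ ‖u x - u y‖ := by
  obtain ⟨c, hc, δ, hδ, hδ2, hnear⟩ := exists_inner_unitTangent_lower_bound hC1 hper hreg
  have hnear' : ∀ x y, y ≤ x → x - y ≤ δ → c * |x - y| ≤ ‖u x - u y‖ := by
    intro x y hyx hxy
    rw [abs_of_nonneg (sub_nonneg.2 hyx)]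
    refine (hnear x y hyx hxy).1.trans ((real_inner_le_norm _ _).trans ?_)
    rw [norm_unitTangent hreg, one_mul]
  have hu := hC1.continuous
  let K : Set (ℝ × ℝ) := (Icc (-1) 2 ×ˢ Icc 0 1) ∩ {p | δ ≤ |p.1 - p.2| ∧ |p.1 - p.2| ≤ 1 / 2}
  have hK : IsCompact K := by
    refine (isCompact_Icc.prod isCompact_Icc).inter_right ?_
    have hd : Continuous fun p : ℝ × ℝ => |p.1 - p.2| := by fun_prop
    exact (isClosed_le continuous_const hd).inter (isClosed_le hd continuous_const)
  obtain ⟨m, hm, hmK⟩ := hK.exists_forall_le' (f := fun p => ‖u p.1 - u p.2‖) (a := 0)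
    (by fun_prop) (by
      rintro ⟨x, y⟩ ⟨-, h1, h2⟩
      dsimp only at h1 h2 ⊢
      refine norm_pos_iff.2 fun h => ?_
      have h3 := circDist_eq_abs h2
      have h4 : circDist x y = 0 := by
        unfold circDist
        rw [AddCircle.coe_sub, hemb x y (sub_eq_zero.1 h), sub_self, norm_zero]
      linarith)
  refine ⟨min c m, by positivity, fun x y => ?_⟩
  obtain ⟨l, hl⟩ : ∃ l : ℤ, y + l ∈ Icc (0 : ℝ) 1 :=
    ⟨-⌊y⌋, by push_cast; constructor <;> linarith [Int.floor_le y, Int.lt_floor_add_one y]⟩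
  obtain ⟨k, hk⟩ := exists_int_abs_add_sub_le_half x (y + l)
  rw [← circDist_add_int x y k, circDist_comm, ← circDist_add_int y _ l, circDist_comm,
    circDist_eq_abs hk, ← hper.apply_add_int x k, ← hper.apply_add_int y l]
  generalize x + (k : ℝ) = x at *
  generalize y + (l : ℝ) = y at *
  rcases le_total δ |x - y| with h | h
  · have hx := abs_le.1 hk
    have := hmK (x, y) ⟨⟨⟨by linarith [hl.1], by linarith [hl.2]⟩, hl⟩, h, hk⟩
    dsimp only at this
    nlinarith [min_le_right c m]
  · have h2 : c * |x - y| ≤ ‖u x - u y‖ := by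
      have h3 := abs_le.1 h
      rcases le_total y x with hyx | hyx
      · exact hnear' x y hyx (by linarith)
      · rw [abs_sub_comm, norm_sub_rev]
        exact hnear' y x hyx (by linarith)
    exact (mul_le_mul_of_nonneg_right (min_le_left _ _) (abs_nonneg _)).trans h2

end curve

section density

variable {n : ℕ} {u : ℝ → EuclideanSpace ℝ (Fin n)} {q : ℝ}

/-- The integrand of the tangent-point functional. -/
def tpDensity (q : ℝ) (u : ℝ → EuclideanSpace ℝ (Fin n)) (x y : ℝ) : ℝ :=
  wedgeSq (deriv u y) (u x - u y) ^ (q / 2) / ‖u x - u y‖ ^ (2 * q)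

/-- The integrand of the `q`-th power of the `W^{1-1/q,q}`-seminorm of the unit tangent. -/
def tangentDensity (q : ℝ) (u : ℝ → EuclideanSpace ℝ (Fin n)) (x y : ℝ) : ℝ :=
  ‖unitTangent u x - unitTangent u y‖ ^ q / circDist x y ^ q

lemma tpDensity_eq_rpow (q : ℝ) (u : ℝ → EuclideanSpace ℝ (Fin n)) (x y : ℝ) :
    tpDensity q u x y = (√(wedgeSq (deriv u y) (u x - u y)) / ‖u x - u y‖ ^ 2) ^ q := by
  rw [tpDensity, Real.div_rpow (by positivity) (by positivity), Real.sqrt_eq_rpow,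
    ← Real.rpow_mul (wedgeSq_nonneg _ _), ← Real.rpow_natCast, ← Real.rpow_mul (norm_nonneg _)]
  congr 2
  ring

lemma tpDensity_nonneg (q : ℝ) (u : ℝ → EuclideanSpace ℝ (Fin n)) (x y : ℝ) :
    0 ≤ tpDensity q u x y := by
  rw [tpDensity_eq_rpow]
  positivity

lemma tangentDensity_eq_rpow (q : ℝ) (u : ℝ → EuclideanSpace ℝ (Fin n)) (x y : ℝ) :
    tangentDensity q u x y = (‖unitTangent u x - unitTangent u y‖ / circDist x y) ^ q := by
  rw [tangentDensity, Real.div_rpow (norm_nonneg _) (circDist_nonneg _ _)]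

lemma tangentDensity_comm (q : ℝ) (u : ℝ → EuclideanSpace ℝ (Fin n)) (x y : ℝ) :
    tangentDensity q u x y = tangentDensity q u y x := by
  rw [tangentDensity, tangentDensity, norm_sub_rev, circDist_comm]

lemma tpDensity_add_int_left (hper : Function.Periodic u 1) (x y : ℝ) (k : ℤ) :
    tpDensity q u (x + k) y = tpDensity q u x y := by
  simp only [tpDensity, hper.apply_add_int]

lemma tpDensity_add_int_right (hper : Function.Periodic u 1) (x y : ℝ) (k : ℤ) :
    tpDensity q u x (y + k) = tpDensity q u x y := by
  simp only [tpDensity, hper.apply_add_int, hper.deriv_periodic.apply_add_int]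

lemma tangentDensity_add_int_left (hper : Function.Periodic u 1) (x y : ℝ) (k : ℤ) :
    tangentDensity q u (x + k) y = tangentDensity q u x y := by
  simp only [tangentDensity, (periodic_unitTangent hper).apply_add_int, circDist_add_int]

lemma add_rpow_le_two_rpow_mul {a b q : ℝ} (ha : 0 ≤ a) (hb : 0 ≤ b) (hq : 0 ≤ q) :
    (a + b) ^ q ≤ 2 ^ q * (a ^ q + b ^ q) := by
  have key : ∀ a b : ℝ, 0 ≤ a → a ≤ b → (a + b) ^ q ≤ 2 ^ q * (a ^ q + b ^ q) := by
    intro a b ha hab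
    have hb := ha.trans hab
    calc (a + b) ^ q ≤ (2 * b) ^ q := by gcongr; linarith
      _ = 2 ^ q * b ^ q := Real.mul_rpow zero_le_two hb
      _ ≤ _ := by gcongr; linarith [Real.rpow_nonneg ha q]
  rcases le_total a b with h | h
  · exact key a b ha h
  · rw [add_comm a, add_comm (a ^ q)]
    exact key b a hb h

lemma exists_tangentDensity_le (hq : 0 < q) (hC1 : ContDiff ℝ 1 u) (hper : Function.Periodic u 1)
    (hreg : Regular u) :
    ∃ K ≥ 0, ∃ K' ≥ 0, ∀ x y,
      tangentDensity q u x y ≤ K * (tpDensity q u x y + tpDensity q u y x) + K' := by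
  obtain ⟨c, hc, hcu⟩ := hreg.exists_lower_bound
  obtain ⟨C, hC, hCu⟩ := exists_norm_deriv_le hC1 hper
  obtain ⟨c', hc', δ, hδ, hδ2, hnear⟩ := exists_inner_unitTangent_lower_bound hC1 hper hreg
  have near : ∀ x y, y ≤ x → x - y ≤ δ → tangentDensity q u x y ≤
      (2 * C / c) ^ q * 2 ^ q * (tpDensity q u x y + tpDensity q u y x) + (2 / δ) ^ q := by
    intro x y hyx hxy
    have hd0 : 0 ≤ x - y := sub_nonneg.2 hyx
    have hd : circDist x y = x - y := by
      rw [circDist_eq_abs (by rw [abs_of_nonneg hd0]; linarith), abs_of_nonneg hd0]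
    refine le_add_of_le_of_nonneg ?_ (by positivity)
    obtain ⟨h1, h2⟩ := hnear x y hyx hxy
    set w := u x - u y with hw
    have hwC : ‖w‖ ≤ C * (x - y) := hd ▸ norm_sub_le_mul_circDist hC1 hper hCu x y
    have h3 := norm_mul_norm_sub_le_wedge (norm_unitTangent hreg x) (norm_unitTangent hreg y)
      (le_trans (by positivity) h1) (le_trans (by positivity) h2)
    have hcz : ∀ z, c * √(wedgeSq (unitTangent u z) w) ≤ √(wedgeSq (deriv u z) w) := by
      intro z
      rw [wedgeSq_deriv_eq hreg, Real.sqrt_mul (by positivity), Real.sqrt_sq (norm_nonneg _)]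
      exact mul_le_mul_of_nonneg_right (hcu z) (Real.sqrt_nonneg _)
    have hsymm : tpDensity q u y x = (√(wedgeSq (deriv u x) w) / ‖w‖ ^ 2) ^ q := by
      rw [tpDensity_eq_rpow, ← neg_sub (u x), wedgeSq_neg_right, norm_neg]
    rw [tangentDensity_eq_rpow, hd, hsymm, tpDensity_eq_rpow, ← hw]
    set A := √(wedgeSq (deriv u x) w) with hA
    set B := √(wedgeSq (deriv u y) w) with hB
    have h4 : ‖unitTangent u x - unitTangent u y‖ / (x - y) ≤
        2 * C / c * (B / ‖w‖ ^ 2 + A / ‖w‖ ^ 2) := by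
      rcases hd0.eq_or_lt with h0 | h0
      · rw [← h0, div_zero]; positivity
      have hw0 : 0 < ‖w‖ := by
        refine norm_pos_iff.2 fun h => ?_
        rw [h, inner_zero_right] at h1
        nlinarith
      have h5 : c * (‖w‖ * ‖unitTangent u x - unitTangent u y‖) ≤ 2 * (A + B) := by
        nlinarith [hcz x, hcz y]
      rw [← add_div, div_mul_div_comm, div_le_div_iff₀ h0 (by positivity)]
      calc ‖unitTangent u x - unitTangent u y‖ * (c * ‖w‖ ^ 2)
          = c * (‖w‖ * ‖unitTangent u x - unitTangent u y‖) * ‖w‖ := by ring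
        _ ≤ 2 * (A + B) * (C * (x - y)) := by gcongr
        _ = 2 * C * (B + A) * (x - y) := by ring
    calc (‖unitTangent u x - unitTangent u y‖ / (x - y)) ^ q
        ≤ (2 * C / c * (B / ‖w‖ ^ 2 + A / ‖w‖ ^ 2)) ^ q := by gcongr
      _ = (2 * C / c) ^ q * (B / ‖w‖ ^ 2 + A / ‖w‖ ^ 2) ^ q :=
        Real.mul_rpow (by positivity) (by positivity)
      _ ≤ (2 * C / c) ^ q * (2 ^ q * ((B / ‖w‖ ^ 2) ^ q + (A / ‖w‖ ^ 2) ^ q)) := by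
        gcongr
        exact add_rpow_le_two_rpow_mul (by positivity) (by positivity) hq.le
      _ = _ := by ring
  refine ⟨(2 * C / c) ^ q * 2 ^ q, by positivity, (2 / δ) ^ q, by positivity, fun x y => ?_⟩
  obtain ⟨k, hk⟩ := exists_int_abs_add_sub_le_half x y
  rw [← tangentDensity_add_int_left hper x y k, ← tpDensity_add_int_left hper x y k,
    ← tpDensity_add_int_right hper y x k]
  generalize x + (k : ℝ) = x at *
  rcases le_total δ |x - y| with h | h
  · refine le_add_of_nonneg_of_le (mul_nonneg (by positivity)
      (add_nonneg (tpDensity_nonneg _ _ _ _) (tpDensity_nonneg _ _ _ _))) ?_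
    rw [tangentDensity_eq_rpow, circDist_eq_abs hk]
    have h2 : ‖unitTangent u x - unitTangent u y‖ ≤ 2 := by
      refine (norm_sub_le _ _).trans ?_
      rw [norm_unitTangent hreg, norm_unitTangent hreg]
      norm_num
    gcongr
  · have h3 := abs_le.1 h
    rcases le_total y x with hyx | hyx
    · exact near x y hyx (by linarith)
    · rw [tangentDensity_comm, add_comm (tpDensity q u x y)]
      exact near y x hyx (by linarith)

lemma rpow_integral_le_integral_rpow {g : ℝ → ℝ} (hg : Continuous g) (hg0 : ∀ s, 0 ≤ g s)
    (hq : 1 ≤ q) :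
    (∫ s in Ioc (0 : ℝ) 1, g s) ^ q ≤ ∫ s in Ioc (0 : ℝ) 1, g s ^ q := by
  have : IsProbabilityMeasure (volume.restrict (Ioc (0 : ℝ) 1)) := ⟨by simp⟩
  have hgq : Continuous fun s => g s ^ q := hg.rpow_const fun _ => Or.inr (by linarith)
  refine (convexOn_rpow hq).map_integral_le
    (continuousOn_id.rpow_const fun _ _ => Or.inr (by linarith)) isClosed_Ici
    (ae_of_all _ hg0) ?_ ?_
  · exact (hg.integrableOn_Icc).mono_set Ioc_subset_Icc_self
  · exact (hgq.integrableOn_Icc).mono_set Ioc_subset_Icc_self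

lemma exists_tpDensity_le (hq : 1 ≤ q) (hC1 : ContDiff ℝ 1 u) (hper : Function.Periodic u 1)
    (hemb : Embedded u) (hreg : Regular u) :
    ∃ K ≥ 0, ∀ y h, |h| ≤ 1 / 2 → tpDensity q u (y + h) y ≤
      K * ∫ s in Ioc (0 : ℝ) 1, ‖unitTangent u (y + s * h) - unitTangent u y‖ ^ q / |h| ^ q := by
  obtain ⟨C, hC, hCu⟩ := exists_norm_deriv_le hC1 hper
  obtain ⟨m, hm, hmu⟩ := exists_mul_circDist_le_norm_sub hC1 hper hemb hreg
  refine ⟨(C ^ 2 / m ^ 2) ^ q, by positivity, fun y h hh => ?_⟩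
  have hT := continuous_unitTangent hC1 hreg
  have hv := hC1.continuous_deriv le_rfl
  set g : ℝ → ℝ := fun s => ‖unitTangent u (y + s * h) - unitTangent u y‖ with hg
  have hgc : Continuous g := by fun_prop
  have hmw : m * |h| ≤ ‖u (y + h) - u y‖ := by
    have := hmu (y + h) y
    rwa [circDist_eq_abs (by simpa using hh), add_sub_cancel_left] at this
  set w := u (y + h) - u y with hw
  have hint : w = h • ∫ s in (0 : ℝ)..1, deriv u (y + s * h) := by
    have := intervalIntegral.integral_unitInterval_deriv_eq_sub (f := u) (f' := deriv u)
      (z₀ := y) (z₁ := h) (by fun_prop)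
      (fun t _ => ((hC1.differentiable one_ne_zero) _).hasDerivAt)
    simpa using this.symm
  set G := ∫ s in (0 : ℝ)..1, g s with hG
  have hG0 : 0 ≤ G := intervalIntegral.integral_nonneg zero_le_one fun s _ => norm_nonneg _
  have hline : ‖w - (h * ∫ s in (0 : ℝ)..1, ‖deriv u (y + s * h)‖) • unitTangent u y‖ ≤
      |h| * (C * G) := by
    have e1 : w - (h * ∫ s in (0 : ℝ)..1, ‖deriv u (y + s * h)‖) • unitTangent u y =
        h • ∫ s in (0 : ℝ)..1, ‖deriv u (y + s * h)‖ •
          (unitTangent u (y + s * h) - unitTangent u y) := by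
      rw [hint, mul_smul, ← smul_sub, ← intervalIntegral.integral_smul_const,
        ← intervalIntegral.integral_sub]
      · simp only [smul_sub, norm_smul_unitTangent hreg]
      · exact Continuous.intervalIntegrable (by fun_prop) _ _
      · exact Continuous.intervalIntegrable (by fun_prop) _ _
    rw [e1, norm_smul, Real.norm_eq_abs]
    refine mul_le_mul_of_nonneg_left ?_ (abs_nonneg h)
    rw [hG, ← intervalIntegral.integral_const_mul]
    refine intervalIntegral.norm_integral_le_of_norm_le zero_le_one (ae_of_all _ fun s _ => ?_)
      (Continuous.intervalIntegrable (by fun_prop) _ _)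
    rw [norm_smul, norm_norm]
    exact mul_le_mul_of_nonneg_right (hCu _) (norm_nonneg _)
  have hwedge : √(wedgeSq (deriv u y) w) ≤ C * (|h| * (C * G)) := by
    rw [wedgeSq_deriv_eq hreg, Real.sqrt_mul (by positivity), Real.sqrt_sq (norm_nonneg _)]
    refine mul_le_mul (hCu y) ?_ (Real.sqrt_nonneg _) hC.le
    exact Real.sqrt_le_iff.2 ⟨by positivity,
      (wedgeSq_le_norm_sub_smul_sq (norm_unitTangent hreg y) w _).trans
        (pow_le_pow_left₀ (norm_nonneg _) hline 2)⟩
  have hbase : √(wedgeSq (deriv u y) w) / ‖w‖ ^ 2 ≤ C ^ 2 / m ^ 2 * (G / |h|) := by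
    rcases (abs_nonneg h).eq_or_lt with h0 | h0
    · have : w = 0 := by rw [hw, abs_eq_zero.1 h0.symm, add_zero, sub_self]
      rw [this, norm_zero]
      simp only [ne_eq, OfNat.ofNat_ne_zero, not_false_eq_true, zero_pow, div_zero]
      positivity
    · calc √(wedgeSq (deriv u y) w) / ‖w‖ ^ 2 ≤ C * (|h| * (C * G)) / (m * |h|) ^ 2 := by
            gcongr
        _ = C ^ 2 / m ^ 2 * (G / |h|) := by field_simp
  calc tpDensity q u (y + h) y ≤ (C ^ 2 / m ^ 2 * (G / |h|)) ^ q := by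
        rw [tpDensity_eq_rpow]
        exact Real.rpow_le_rpow (by positivity) hbase (by linarith)
    _ = (C ^ 2 / m ^ 2) ^ q * (G ^ q / |h| ^ q) := by
        rw [Real.mul_rpow (by positivity) (by positivity), Real.div_rpow hG0 (abs_nonneg _)]
    _ ≤ (C ^ 2 / m ^ 2) ^ q * ((∫ s in Ioc (0 : ℝ) 1, g s ^ q) / |h| ^ q) := by
        gcongr
        rw [hG, intervalIntegral.integral_of_le zero_le_one]
        exact rpow_integral_le_integral_rpow hgc (fun _ => norm_nonneg _) hq
    _ = _ := by rw [integral_div]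

end density

section integral

variable {n : ℕ} {u : ℝ → EuclideanSpace ℝ (Fin n)} {q : ℝ}

/-- A Hardy-type inequality: averaging over dilations does not increase the integral. -/
lemma lintegral_dilation_average_le {φ : ℝ → ℝ≥0∞} (hφ : Measurable φ) (hq : 1 ≤ q) {r : ℝ}
    (hr : 0 < r) :
    ∫⁻ h in Ioc (-r) r, ∫⁻ s in Ioc (0 : ℝ) 1, ENNReal.ofReal (s ^ q) * φ (s * h) ≤
      ∫⁻ k in Ioc (-r) r, φ k := by
  rw [lintegral_lintegral_swap (by fun_prop)]
  have key : ∀ s ∈ Ioc (0 : ℝ) 1, ∫⁻ h in Ioc (-r) r, ENNReal.ofReal (s ^ q) * φ (s * h) ≤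
      ∫⁻ k in Ioc (-r) r, φ k := by
    rintro s ⟨hs0, hs1⟩
    have hscale : ∫⁻ h in Ioc (-r) r, φ (s * h) ≤
        ENNReal.ofReal s⁻¹ * ∫⁻ k in Ioc (-r) r, φ k := by
      rw [← lintegral_indicator measurableSet_Ioc, ← lintegral_indicator measurableSet_Ioc]
      calc ∫⁻ h, (Ioc (-r) r).indicator (fun h => φ (s * h)) h
          ≤ ∫⁻ h, (Ioc (-r) r).indicator φ (s * h) := by
            refine lintegral_mono fun h => ?_
            by_cases hh : h ∈ Ioc (-r) r
            · have : s * h ∈ Ioc (-r) r := ⟨by nlinarith [hh.1, hh.2], by nlinarith [hh.1, hh.2]⟩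
              rw [indicator_of_mem this, indicator_of_mem hh]
            · rw [indicator_of_notMem hh]
              exact zero_le
        _ = ∫⁻ k, (Ioc (-r) r).indicator φ k ∂(Measure.map (s * ·) volume) :=
            (lintegral_map (hφ.indicator measurableSet_Ioc) (measurable_const_mul s)).symm
        _ = _ := by
            rw [Real.map_volume_mul_left hs0.ne', lintegral_smul_measure, smul_eq_mul,
              abs_of_pos (inv_pos.2 hs0)]
    rw [lintegral_const_mul' _ _ ENNReal.ofReal_ne_top]
    calc ENNReal.ofReal (s ^ q) * ∫⁻ h in Ioc (-r) r, φ (s * h)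
        ≤ ENNReal.ofReal (s ^ q) * (ENNReal.ofReal s⁻¹ * ∫⁻ k in Ioc (-r) r, φ k) := by gcongr
      _ = ENNReal.ofReal (s ^ q * s⁻¹) * ∫⁻ k in Ioc (-r) r, φ k := by
          rw [← mul_assoc, ENNReal.ofReal_mul (by positivity)]
      _ ≤ 1 * ∫⁻ k in Ioc (-r) r, φ k := by
          gcongr
          rw [ENNReal.ofReal_le_one, ← div_eq_mul_inv, div_le_one hs0]
          simpa using Real.rpow_le_rpow_of_exponent_ge hs0 hs1 hq
      _ = _ := one_mul _
  calc _ ≤ ∫⁻ _ in Ioc (0 : ℝ) 1, ∫⁻ k in Ioc (-r) r, φ k :=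
        setLIntegral_mono measurable_const key
    _ = _ := by simp

lemma setLIntegral_translate_periodic {f : ℝ → ℝ≥0∞} (hf : Function.Periodic f 1) (y : ℝ) :
    ∫⁻ x in Ioc (0 : ℝ) 1, f x = ∫⁻ h in Ioc (-(1 / 2) : ℝ) (1 / 2), f (y + h) := by
  have h1 := setLIntegral_periodic hf 0 (y + -(1 / 2))
  rw [zero_add] at h1
  rw [h1, ← (measurePreserving_add_left volume y).setLIntegral_comp_preimage_emb
    (measurableEmbedding_addLeft y), preimage_const_add_Ioc]
  ring_nf

lemma measurable_tpDensity (hC1 : ContDiff ℝ 1 u) :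
    Measurable fun p : ℝ × ℝ => tpDensity q u p.1 p.2 := by
  have h1 := hC1.continuous
  have h2 := hC1.continuous_deriv le_rfl
  have h3 : Continuous fun p : ℝ × ℝ => wedgeSq (deriv u p.2) (u p.1 - u p.2) := by
    unfold wedgeSq
    fun_prop
  have h4 : Continuous fun p : ℝ × ℝ => ‖u p.1 - u p.2‖ := by fun_prop
  exact (h3.measurable.pow_const _).div (h4.measurable.pow_const _)

lemma measurable_tangentDensity (hC1 : ContDiff ℝ 1 u) (hreg : Regular u) :
    Measurable fun p : ℝ × ℝ => tangentDensity q u p.1 p.2 := by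
  have h1 := continuous_unitTangent hC1 hreg
  have h2 : Continuous fun p : ℝ × ℝ => ‖unitTangent u p.1 - unitTangent u p.2‖ := by fun_prop
  exact (h2.measurable.pow_const _).div (measurable_circDist.pow_const _)

lemma volume_restrict_unitSq :
    volume.restrict unitSq =
      (volume.restrict (Ioc (0 : ℝ) 1)).prod (volume.restrict (Ioc (0 : ℝ) 1)) := by
  rw [Measure.prod_restrict, unitSq, Measure.volume_eq_prod]

lemma setLIntegral_unitSq_swap (f : ℝ × ℝ → ℝ≥0∞) :
    ∫⁻ p in unitSq, f p.swap = ∫⁻ p in unitSq, f p := by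
  rw [volume_restrict_unitSq, lintegral_prod_swap]

lemma TPe_lt_top_iff (hq : 0 < q) :
    TPe q u < ⊤ ↔ ∫⁻ p in unitSq, ENNReal.ofReal (tpDensity q u p.1 p.2) < ⊤ := by
  unfold TPe
  rw [ENNReal.mul_lt_top_iff]
  have : ENNReal.ofReal (1 / q) ≠ 0 := by
    rw [Ne, ENNReal.ofReal_eq_zero, not_le]
    positivity
  constructor
  · rintro (h | h | h)
    · exact h.2
    · exact absurd h this
    · exact h ▸ ENNReal.zero_lt_top
  · exact fun h => Or.inl ⟨ENNReal.ofReal_lt_top, h⟩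

lemma sobSemPow_unitTangent (hq : 0 < q) :
    sobSemPow (1 - 1 / q) q (fun x => ‖deriv u x‖⁻¹ • deriv u x) =
      ∫⁻ p in unitSq, ENNReal.ofReal (tangentDensity q u p.1 p.2) := by
  have : 1 + (1 - 1 / q) * q = q := by field_simp; ring
  unfold sobSemPow
  rw [this]
  rfl

attribute [local irreducible] tpDensity tangentDensity

lemma lintegral_tangentDensity_lt_top (hq : 0 < q) (hC1 : ContDiff ℝ 1 u)
    (hper : Function.Periodic u 1) (hreg : Regular u)
    (h : ∫⁻ p in unitSq, ENNReal.ofReal (tpDensity q u p.1 p.2) < ⊤) :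
    ∫⁻ p in unitSq, ENNReal.ofReal (tangentDensity q u p.1 p.2) < ⊤ := by
  obtain ⟨K, hK, K', hK', hle⟩ := exists_tangentDensity_le hq hC1 hper hreg
  have hm : Measurable fun p : ℝ × ℝ => ENNReal.ofReal (tpDensity q u p.1 p.2) :=
    (measurable_tpDensity hC1).ennreal_ofReal
  have hm' : Measurable fun p : ℝ × ℝ => ENNReal.ofReal (tpDensity q u p.2 p.1) :=
    hm.comp measurable_swap
  have hsw := setLIntegral_unitSq_swap fun p => ENNReal.ofReal (tpDensity q u p.1 p.2)
  simp only [Prod.fst_swap, Prod.snd_swap] at hsw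
  have hvol : ∫⁻ _ in unitSq, ENNReal.ofReal K' < ⊤ := by
    rw [volume_restrict_unitSq, lintegral_const]
    exact ENNReal.mul_lt_top ENNReal.ofReal_lt_top (measure_lt_top _ _)
  calc ∫⁻ p in unitSq, ENNReal.ofReal (tangentDensity q u p.1 p.2)
      ≤ ∫⁻ p in unitSq, (ENNReal.ofReal K * (ENNReal.ofReal (tpDensity q u p.1 p.2) +
          ENNReal.ofReal (tpDensity q u p.2 p.1)) + ENNReal.ofReal K') := by
        refine lintegral_mono fun p => ?_
        rw [← ENNReal.ofReal_add (tpDensity_nonneg _ _ _ _) (tpDensity_nonneg _ _ _ _),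
          ← ENNReal.ofReal_mul hK, ← ENNReal.ofReal_add (mul_nonneg hK
            (add_nonneg (tpDensity_nonneg _ _ _ _) (tpDensity_nonneg _ _ _ _))) hK']
        exact ENNReal.ofReal_le_ofReal (hle p.1 p.2)
    _ = ENNReal.ofReal K * ((∫⁻ p in unitSq, ENNReal.ofReal (tpDensity q u p.1 p.2)) +
          ∫⁻ p in unitSq, ENNReal.ofReal (tpDensity q u p.2 p.1)) +
          ∫⁻ _ in unitSq, ENNReal.ofReal K' := by
        rw [lintegral_add_right _ measurable_const,
          lintegral_const_mul' _ _ ENNReal.ofReal_ne_top, lintegral_add_right _ hm']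
    _ < ⊤ := by
        rw [hsw]
        exact ENNReal.add_lt_top.2
          ⟨ENNReal.mul_lt_top ENNReal.ofReal_lt_top (ENNReal.add_lt_top.2 ⟨h, h⟩), hvol⟩

lemma lintegral_tpDensity_lt_top (hq : 1 ≤ q) (hC1 : ContDiff ℝ 1 u)
    (hper : Function.Periodic u 1) (hemb : Embedded u) (hreg : Regular u)
    (h : ∫⁻ p in unitSq, ENNReal.ofReal (tangentDensity q u p.1 p.2) < ⊤) :
    ∫⁻ p in unitSq, ENNReal.ofReal (tpDensity q u p.1 p.2) < ⊤ := by
  obtain ⟨K, hK, hle⟩ := exists_tpDensity_le hq hC1 hper hemb hreg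
  have hT := continuous_unitTangent hC1 hreg
  have hmT : Measurable fun p : ℝ × ℝ => ENNReal.ofReal (tpDensity q u p.1 p.2) :=
    (measurable_tpDensity hC1).ennreal_ofReal
  have hmS : Measurable fun p : ℝ × ℝ => ENNReal.ofReal (tangentDensity q u p.1 p.2) :=
    (measurable_tangentDensity hC1 hreg).ennreal_ofReal
  have slice : ∀ y, ∫⁻ x in Ioc (0 : ℝ) 1, ENNReal.ofReal (tpDensity q u x y) ≤
      ENNReal.ofReal K * ∫⁻ x in Ioc (0 : ℝ) 1, ENNReal.ofReal (tangentDensity q u x y) := by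
    intro y
    have hφ : Measurable fun k => ENNReal.ofReal (tangentDensity q u (y + k) y) :=
      hmS.comp (by fun_prop : Measurable fun k : ℝ => (y + k, y))
    rw [setLIntegral_translate_periodic (y := y)
        (f := fun x => ENNReal.ofReal (tpDensity q u x y))
        (fun x => by
          have h1 := tpDensity_add_int_left (q := q) hper x y 1
          rw [Int.cast_one] at h1
          simp only [h1]),
      setLIntegral_translate_periodic (y := y)
        (f := fun x => ENNReal.ofReal (tangentDensity q u x y))
        (fun x => by
          have h1 := tangentDensity_add_int_left (q := q) hper x y 1
          rw [Int.cast_one] at h1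
          simp only [h1])]
    refine le_trans ?_ (mul_le_mul_right (lintegral_dilation_average_le hφ hq one_half_pos) _)
    rw [← lintegral_const_mul' _ _ ENNReal.ofReal_ne_top]
    refine setLIntegral_mono' measurableSet_Ioc fun h hh => ?_
    have hh' : |h| ≤ 1 / 2 := abs_le.2 ⟨hh.1.le, hh.2⟩
    refine (ENNReal.ofReal_le_ofReal (hle y h hh')).trans ?_
    have hc : Continuous fun s : ℝ =>
        ‖unitTangent u (y + s * h) - unitTangent u y‖ ^ q / |h| ^ q := by
      refine Continuous.div_const (Continuous.rpow_const ?_ fun _ => Or.inr (by linarith)) _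
      fun_prop
    rw [ENNReal.ofReal_mul hK, ofReal_integral_eq_lintegral_ofReal
      (hc.integrableOn_Icc.mono_set Ioc_subset_Icc_self) (ae_of_all _ fun s => by positivity)]
    refine mul_le_mul_right (setLIntegral_mono' measurableSet_Ioc fun s hs => ?_) _
    rw [← ENNReal.ofReal_mul (Real.rpow_nonneg hs.1.le _)]
    refine ENNReal.ofReal_le_ofReal (le_of_eq ?_)
    have hd : circDist (y + s * h) y = s * |h| := by
      have e : |s * h| = s * |h| := by rw [abs_mul, abs_of_pos hs.1]
      rw [circDist_eq_abs] <;> rw [add_sub_cancel_left, e]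
      nlinarith [hs.1, hs.2, abs_nonneg h]
    rw [tangentDensity, hd, Real.mul_rpow hs.1.le (abs_nonneg h), ← mul_div_assoc,
      mul_div_mul_left _ _ (Real.rpow_pos_of_pos hs.1 q).ne']
  rw [volume_restrict_unitSq, lintegral_prod_symm' _ hmS] at h
  rw [volume_restrict_unitSq, lintegral_prod_symm' _ hmT]
  refine (lintegral_mono slice).trans_lt ?_
  rw [lintegral_const_mul' _ _ ENNReal.ofReal_ne_top]
  exact ENNReal.mul_lt_top ENNReal.ofReal_lt_top h

end integral

/-- Characterization of the energy space: for an embedded regular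
`C¹` curve, `TP(u) < ∞` if and only if `u'/|u'| ∈ W^{1-1/q,q}(ℝ/ℤ, ℝⁿ)`. -/
theorem tp_finite_iff_unit_tangent_sobolev (n : ℕ) (q : ℝ) (hq : 2 < q)
    (u : ℝ → EuclideanSpace ℝ (Fin n))
    (hC1 : ContDiff ℝ 1 u) (hper : Function.Periodic u 1)
    (hemb : Embedded u) (hreg : Regular u) :
    TPe q u < ⊤ ↔
      sobSemPow (1 - 1 / q) q (fun x => ‖deriv u x‖⁻¹ • deriv u x) < ⊤ := by
  have hq0 : 0 < q := by linarith
  rw [TPe_lt_top_iff hq0, sobSemPow_unitTangent hq0]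
  exact ⟨lintegral_tangentDensity_lt_top hq0 hC1 hper hreg,
    lintegral_tpDensity_lt_top (by linarith) hC1 hper hemb hreg⟩
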